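/- Let r ∈ ℝ, T > 0, p > 4, R > 0, and let σ : [0,∞)×ℝ → ℝ be measurable with |σ(x,u)| ≤ R(e^{rx}+|u|) for all x ≥ 0, u ∈ ℝ. Then there exists a constant C = C(r,p,T) > 0 such that for every continuous u : [0,T]×[0,∞) → ℝ with ‖u‖_{C_r^T} < ∞, sup_{t∈[0,T]} sup_{x≥0} ∫_0^t ∫_0^∞ G_r(t−s,x,y)² e^{−2ry} |σ(y,u(s,y))|² dy ds ≤ C^{2/p} R² T^{1/2} ( 1 + ‖u‖_{C_r^T} )². -/

import Mathlib

/-!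
The weight `e^{-2ry}` turns the linear growth of `σ` into the uniform bound
`e^{-2ry} |σ(y, u(s, y))|² ≤ R² (1 + ‖u‖)²`, so only the integral of `G_r²` matters. Since
`0 ≤ G(τ,x,y) ≤ (4πτ)^{-1/2} e^{-(x-y)²/(4τ)}` on the half-line, completing the square bounds
`G_r(τ,x,·)²` by `e^{2r²τ} (8πτ)^{-1/2}` times the Gaussian density of mean `x + 2rτ` and variance
`τ`. Integrating over `y`, and then `τ = t - s` over `[0, t]`, gives `e^{2r²t} (t / (2π))^{1/2}`,
so `C = (e^{2r²T} / √(2π))^{p/2}` works.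
-/

open MeasureTheory Real Set Filter

/-- Dirichlet heat kernel on `[0,∞)`. -/
noncomputable def G (t x y : ℝ) : ℝ :=
  (Real.sqrt (4 * Real.pi * t))⁻¹ *
    (Real.exp (-(x - y) ^ 2 / (4 * t)) - Real.exp (-(x + y) ^ 2 / (4 * t)))

/-- Exponentially weighted kernel `G_r(t,x,y) = e^{-r(x-y)} G(t,x,y)`. -/
noncomputable def Gr (r t x y : ℝ) : ℝ := Real.exp (-r * (x - y)) * G t x y

/-- Weighted sup norm `‖v‖_{L_r} = sup_{x ≥ 0} e^{-rx}|v(x)|`. -/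
noncomputable def LrNorm (r : ℝ) (v : ℝ → ℝ) : ℝ :=
  sSup ((fun x => Real.exp (-r * x) * |v x|) '' Ici 0)

/-- Weighted sup norm `‖u‖_{C_r^T} = sup_{t ∈ [0,T]} sup_{x ≥ 0} e^{-rx}|u(t,x)|`. -/
noncomputable def CrNorm (r T : ℝ) (u : ℝ → ℝ → ℝ) : ℝ :=
  sSup ((fun q : ℝ × ℝ => Real.exp (-r * q.2) * |u q.1 q.2|) '' (Icc 0 T ×ˢ Ici 0))

/-- `‖u‖_{C_r^T} < ∞`, expressed as boundedness of the weighted values. -/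
def CrBdd (r T : ℝ) (u : ℝ → ℝ → ℝ) : Prop :=
  BddAbove ((fun q : ℝ × ℝ => Real.exp (-r * q.2) * |u q.1 q.2|) '' (Icc 0 T ×ˢ Ici 0))

theorem lintegral_Ioc_rpow_sub {a t : ℝ} (ha : -1 < a) (ht : 0 ≤ t) :
    ∫⁻ s in Ioc 0 t, ENNReal.ofReal ((t - s) ^ a) = ENNReal.ofReal (t ^ (a + 1) / (a + 1)) := by
  have h_int : IntegrableOn (fun s => (t - s) ^ a) (Ioc 0 t) := by
    rw [← intervalIntegrable_iff_integrableOn_Ioc_of_le ht]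
    simpa using ((intervalIntegral.intervalIntegrable_rpow' ha).comp_sub_left (a := t) (b := 0) t)
  have h_nonneg : ∀ s ∈ Ioc 0 t, 0 ≤ (t - s) ^ a := fun s hs => rpow_nonneg (sub_nonneg.2 hs.2) a
  rw [← ofReal_integral_eq_lintegral_ofReal h_int
      (ae_restrict_of_forall_mem measurableSet_Ioc h_nonneg),
    ← intervalIntegral.integral_of_le ht,
    intervalIntegral.integral_comp_sub_left (fun s => s ^ a), sub_self, sub_zero,
    integral_rpow (Or.inl ha), zero_rpow (by linarith), sub_zero]

theorem integral_integral_le_of_lintegral_lintegral_le {α β : Type*} [MeasurableSpace α]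
    [MeasurableSpace β] {μ : Measure α} {ν : Measure β} {f : α → β → ℝ} {c : ℝ}
    (hf : ∀ a b, 0 ≤ f a b) (hc : 0 ≤ c)
    (h : ∫⁻ a, ∫⁻ b, ENNReal.ofReal (f a b) ∂ν ∂μ ≤ ENNReal.ofReal c) :
    ∫ a, ∫ b, f a b ∂ν ∂μ ≤ c := by
  rw [← ENNReal.ofReal_le_ofReal_iff hc,
    ← enorm_of_nonneg (integral_nonneg fun a => integral_nonneg (hf a))]
  calc ‖∫ a, ∫ b, f a b ∂ν ∂μ‖ₑ ≤ ∫⁻ a, ‖∫ b, f a b ∂ν‖ₑ ∂μ := enorm_integral_le_lintegral_enorm _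
    _ ≤ ∫⁻ a, ∫⁻ b, ‖f a b‖ₑ ∂ν ∂μ := lintegral_mono fun a => enorm_integral_le_lintegral_enorm _
    _ ≤ ENNReal.ofReal c := by simpa only [enorm_of_nonneg (hf _ _)] using h

section HeatKernel

variable {t x y : ℝ}

theorem G_nonneg (ht : 0 ≤ t) (hx : 0 ≤ x) (hy : 0 ≤ y) : 0 ≤ G t x y := by
  have h_exponent : -(x + y) ^ 2 / (4 * t) ≤ -(x - y) ^ 2 / (4 * t) := by
    gcongr ?_ / _
    nlinarith [mul_nonneg hx hy]
  exact mul_nonneg (by positivity) (sub_nonneg.2 (exp_le_exp.2 h_exponent))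

theorem G_le_heatKernel (t x y : ℝ) :
    G t x y ≤ (√(4 * π * t))⁻¹ * rexp (-(x - y) ^ 2 / (4 * t)) :=
  mul_le_mul_of_nonneg_left (sub_le_self _ (exp_nonneg _)) (by positivity)

theorem Gr_sq_le_gaussianPDFReal (r : ℝ) (ht : 0 < t) (hx : 0 ≤ x) (hy : 0 ≤ y) :
    Gr r t x y ^ 2 ≤ rexp (2 * r ^ 2 * t) / √(8 * π) * t ^ (-(1 / 2) : ℝ) *
      ProbabilityTheory.gaussianPDFReal (x + 2 * r * t) t.toNNReal y := by
  have h_normalization :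
      ((√(4 * π * t))⁻¹) ^ 2 = (√(8 * π))⁻¹ * t ^ (-(1 / 2) : ℝ) * (√(2 * π * t))⁻¹ := by
    rw [rpow_neg ht.le, ← sqrt_eq_rpow, ← mul_inv, ← mul_inv, ← sqrt_mul (by positivity),
      ← sqrt_mul (by positivity), inv_pow, sq_sqrt (by positivity),
      show 8 * π * t * (2 * π * t) = (4 * π * t) ^ 2 by ring, sqrt_sq (by positivity)]
  have h_complete_square : rexp (-r * (x - y)) ^ 2 * rexp (-(x - y) ^ 2 / (4 * t)) ^ 2 =
      rexp (2 * r ^ 2 * t) * rexp (-(y - (x + 2 * r * t)) ^ 2 / (2 * t)) := by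
    simp only [← exp_nat_mul, ← exp_add]
    congr 1
    push_cast
    field_simp
    ring
  calc Gr r t x y ^ 2 = rexp (-r * (x - y)) ^ 2 * G t x y ^ 2 := mul_pow _ _ 2
    _ ≤ rexp (-r * (x - y)) ^ 2 * ((√(4 * π * t))⁻¹ * rexp (-(x - y) ^ 2 / (4 * t))) ^ 2 := by
        gcongr
        · exact G_nonneg ht.le hx hy
        · exact G_le_heatKernel t x y
    _ = ((√(4 * π * t))⁻¹) ^ 2 *
          (rexp (-r * (x - y)) ^ 2 * rexp (-(x - y) ^ 2 / (4 * t)) ^ 2) := by ring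
    _ = _ := by
        rw [h_normalization, h_complete_square, ProbabilityTheory.gaussianPDFReal,
          coe_toNNReal t ht.le]
        ring

theorem lintegral_Gr_sq_le (r : ℝ) (ht : 0 < t) (hx : 0 ≤ x) :
    ∫⁻ y in Ioi 0, ENNReal.ofReal (Gr r t x y ^ 2) ≤
      ENNReal.ofReal (rexp (2 * r ^ 2 * t) / √(8 * π) * t ^ (-(1 / 2) : ℝ)) := by
  set c := rexp (2 * r ^ 2 * t) / √(8 * π) * t ^ (-(1 / 2) : ℝ)
  set gaussian := ProbabilityTheory.gaussianPDFReal (x + 2 * r * t) t.toNNReal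
  calc ∫⁻ y in Ioi 0, ENNReal.ofReal (Gr r t x y ^ 2)
      ≤ ∫⁻ y in Ioi 0, ENNReal.ofReal c * ENNReal.ofReal (gaussian y) :=
        setLIntegral_mono' measurableSet_Ioi fun y hy => by
          rw [← ENNReal.ofReal_mul (by positivity)]
          exact ENNReal.ofReal_le_ofReal (Gr_sq_le_gaussianPDFReal r ht hx hy.le)
    _ ≤ ∫⁻ y, ENNReal.ofReal c * ENNReal.ofReal (gaussian y) := setLIntegral_le_lintegral _ _
    _ = ENNReal.ofReal c := by
        rw [lintegral_const_mul' _ _ ENNReal.ofReal_ne_top,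
          ProbabilityTheory.lintegral_gaussianPDFReal_eq_one _ (toNNReal_pos.2 ht).ne', mul_one]

theorem lintegral_lintegral_Gr_sq_le (r : ℝ) (ht : 0 ≤ t) (hx : 0 ≤ x) :
    ∫⁻ s in Ioc 0 t, ∫⁻ y in Ioi 0, ENNReal.ofReal (Gr r (t - s) x y ^ 2) ≤
      ENNReal.ofReal (rexp (2 * r ^ 2 * t) / √(2 * π) * t ^ (1 / 2 : ℝ)) := by
  set c := rexp (2 * r ^ 2 * t) / √(8 * π)
  have h_const : c * (t ^ (-(1 / 2) + 1 : ℝ) / (-(1 / 2) + 1)) =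
      rexp (2 * r ^ 2 * t) / √(2 * π) * t ^ (1 / 2 : ℝ) := by
    have h_sqrt : √(8 * π) = 2 * √(2 * π) := by
      rw [show 8 * π = 2 ^ 2 * (2 * π) by ring, sqrt_mul (by positivity), sqrt_sq zero_le_two]
    norm_num [c, h_sqrt]
    field_simp
  calc ∫⁻ s in Ioc 0 t, ∫⁻ y in Ioi 0, ENNReal.ofReal (Gr r (t - s) x y ^ 2)
      = ∫⁻ s in Ioo 0 t, ∫⁻ y in Ioi 0, ENNReal.ofReal (Gr r (t - s) x y ^ 2) :=
        setLIntegral_congr Ioo_ae_eq_Ioc.symm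
    _ ≤ ∫⁻ s in Ioo 0 t, ENNReal.ofReal c * ENNReal.ofReal ((t - s) ^ (-(1 / 2) : ℝ)) :=
        setLIntegral_mono' measurableSet_Ioo fun s hs => by
          have h_pos : 0 < t - s := sub_pos.2 hs.2
          rw [← ENNReal.ofReal_mul (by positivity)]
          refine (lintegral_Gr_sq_le r h_pos hx).trans (ENNReal.ofReal_le_ofReal ?_)
          unfold c
          gcongr
          exact sub_le_self t hs.1.le
    _ = ENNReal.ofReal c * ∫⁻ s in Ioc 0 t, ENNReal.ofReal ((t - s) ^ (-(1 / 2) : ℝ)) := by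
        rw [lintegral_const_mul' _ _ ENNReal.ofReal_ne_top, setLIntegral_congr Ioo_ae_eq_Ioc]
    _ = _ := by
        rw [lintegral_Ioc_rpow_sub (by norm_num) ht, ← ENNReal.ofReal_mul (by positivity), h_const]

theorem lintegral_lintegral_Gr_sq_mul_le (r : ℝ) {F : ℝ → ℝ → ℝ} {M : ℝ} (ht : 0 ≤ t)
    (hx : 0 ≤ x) (hF : ∀ s ∈ Ioc 0 t, ∀ y > 0, F s y ≤ M) :
    ∫⁻ s in Ioc 0 t, ∫⁻ y in Ioi 0, ENNReal.ofReal (Gr r (t - s) x y ^ 2 * F s y) ≤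
      ENNReal.ofReal (rexp (2 * r ^ 2 * t) / √(2 * π) * t ^ (1 / 2 : ℝ) * M) := by
  calc ∫⁻ s in Ioc 0 t, ∫⁻ y in Ioi 0, ENNReal.ofReal (Gr r (t - s) x y ^ 2 * F s y)
      ≤ ∫⁻ s in Ioc 0 t, ∫⁻ y in Ioi 0,
          ENNReal.ofReal (Gr r (t - s) x y ^ 2) * ENNReal.ofReal M :=
        setLIntegral_mono' measurableSet_Ioc fun s hs =>
          setLIntegral_mono' measurableSet_Ioi fun y hy => by
            rw [← ENNReal.ofReal_mul (sq_nonneg _)]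
            gcongr
            exact hF s hs y hy
    _ = (∫⁻ s in Ioc 0 t, ∫⁻ y in Ioi 0, ENNReal.ofReal (Gr r (t - s) x y ^ 2)) *
          ENNReal.ofReal M := by
        simp only [lintegral_mul_const' _ _ ENNReal.ofReal_ne_top]
    _ ≤ _ := by
        rw [ENNReal.ofReal_mul (by positivity)]
        gcongr
        exact lintegral_lintegral_Gr_sq_le r ht hx

end HeatKernel

section Growth

variable {r T : ℝ} {u : ℝ → ℝ → ℝ}

theorem CrNorm_nonneg (r T : ℝ) (u : ℝ → ℝ → ℝ) : 0 ≤ CrNorm r T u :=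
  sSup_nonneg (forall_mem_image.2 fun _ _ => by positivity)

theorem CrBdd.exp_neg_mul_abs_le (hu : CrBdd r T u) {t x : ℝ} (ht : t ∈ Icc 0 T) (hx : 0 ≤ x) :
    rexp (-r * x) * |u t x| ≤ CrNorm r T u :=
  le_csSup hu ⟨(t, x), ⟨ht, hx⟩, rfl⟩

theorem exp_neg_mul_abs_le_of_abs_le {r x R a v : ℝ} (h : |a| ≤ R * (rexp (r * x) + |v|)) :
    rexp (-r * x) * |a| ≤ R * (1 + rexp (-r * x) * |v|) := by
  calc rexp (-r * x) * |a| ≤ rexp (-r * x) * (R * (rexp (r * x) + |v|)) := by gcongr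
    _ = R * (rexp (-r * x) * rexp (r * x) + rexp (-r * x) * |v|) := by ring
    _ = R * (1 + rexp (-r * x) * |v|) := by
        rw [← exp_add, neg_mul, neg_add_cancel, exp_zero]

theorem CrBdd.exp_mul_abs_sq_le (hu : CrBdd r T u) {R a t x : ℝ} (ht : t ∈ Icc 0 T) (hx : 0 ≤ x)
    (ha : |a| ≤ R * (rexp (r * x) + |u t x|)) :
    rexp (-2 * r * x) * |a| ^ 2 ≤ (R * (1 + CrNorm r T u)) ^ 2 := by
  have hR : 0 ≤ R := nonneg_of_mul_nonneg_left ((abs_nonneg a).trans ha) (by positivity)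
  calc rexp (-2 * r * x) * |a| ^ 2 = (rexp (-r * x) * |a|) ^ 2 := by
        rw [mul_pow, ← exp_nat_mul]
        ring_nf
    _ ≤ (R * (1 + rexp (-r * x) * |u t x|)) ^ 2 := by
        gcongr ?_ ^ 2
        exact exp_neg_mul_abs_le_of_abs_le ha
    _ ≤ _ := by
        gcongr
        exact hu.exp_neg_mul_abs_le ht hx

end Growth

/-- The lower Lebesgue integral has no junk value, unlike `∫`, which is `0` off the integrable
functions. -/
theorem stmt_13_general {r T R : ℝ} {σ u : ℝ → ℝ → ℝ}
    (hσ : ∀ x ≥ (0 : ℝ), ∀ v : ℝ, |σ x v| ≤ R * (rexp (r * x) + |v|)) (hu : CrBdd r T u)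
    {t x : ℝ} (ht : t ∈ Icc 0 T) (hx : 0 ≤ x) :
    ∫⁻ s in Ioc 0 t, ∫⁻ y in Ioi 0,
        ENNReal.ofReal (Gr r (t - s) x y ^ 2 * rexp (-2 * r * y) * |σ y (u s y)| ^ 2) ≤
      ENNReal.ofReal
        (rexp (2 * r ^ 2 * T) / √(2 * π) * R ^ 2 * T ^ (1 / 2 : ℝ) * (1 + CrNorm r T u) ^ 2) := by
  have hF : ∀ s ∈ Ioc 0 t, ∀ y > 0,
      rexp (-2 * r * y) * |σ y (u s y)| ^ 2 ≤ (R * (1 + CrNorm r T u)) ^ 2 := fun s hs y hy =>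
    hu.exp_mul_abs_sq_le ⟨hs.1.le, hs.2.trans ht.2⟩ hy.le (hσ y hy.le _)
  simp only [mul_assoc (Gr _ _ _ _ ^ 2)]
  refine (lintegral_lintegral_Gr_sq_mul_le r ht.1 hx hF).trans (ENNReal.ofReal_le_ofReal ?_)
  obtain ⟨ht_nonneg, ht_le⟩ := ht
  calc rexp (2 * r ^ 2 * t) / √(2 * π) * t ^ (1 / 2 : ℝ) * (R * (1 + CrNorm r T u)) ^ 2
      ≤ rexp (2 * r ^ 2 * T) / √(2 * π) * T ^ (1 / 2 : ℝ) * (R * (1 + CrNorm r T u)) ^ 2 := by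
        gcongr
    _ = _ := by ring

/-- as in (4.10) of the paper: weighted square-kernel bound for the diffusion term. -/
theorem stmt_13 (r T p : ℝ) (hT : 0 < T) (hp : 4 < p) :
    ∃ C > (0:ℝ), ∀ R : ℝ, 0 < R →
      ∀ σ : ℝ → ℝ → ℝ,
        Measurable (Function.uncurry σ) →
        (∀ x ≥ (0:ℝ), ∀ u : ℝ, |σ x u| ≤ R * (Real.exp (r * x) + |u|)) →
      ∀ u : ℝ → ℝ → ℝ,
        ContinuousOn (Function.uncurry u) (Icc 0 T ×ˢ Ici 0) → CrBdd r T u →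
        ∀ t ∈ Icc (0:ℝ) T, ∀ x ≥ (0:ℝ),
          (∫ s in Ioc (0:ℝ) t, ∫ y in Ioi (0:ℝ),
              (Gr r (t - s) x y) ^ 2 * Real.exp (-2 * r * y) * |σ y (u s y)| ^ 2)
            ≤ C ^ (2 / p) * R ^ 2 * T ^ ((1:ℝ) / 2) * (1 + CrNorm r T u) ^ 2 := by
  refine ⟨(rexp (2 * r ^ 2 * T) / √(2 * π)) ^ (p / 2), by positivity,
    fun R _ σ _ hσ u _ hu t ht x hx => ?_⟩
  rw [← inv_div p 2, rpow_rpow_inv (by positivity) (by positivity)]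
  exact integral_integral_le_of_lintegral_lintegral_le (fun _ _ => by positivity) (by positivity)
    (stmt_13_general hσ hu ht hx)
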